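/- arXiv:1010.1290 — 2 statements merged into one kernel-verified Lean document; each statement's English description precedes it below -/
import Mathlib

section
/- Let n ≥ 2, let γ be a real symmetric n×n matrix, ℓ ∈ ℝⁿ a nonzero vector with γℓ = 0, λ a nonzero real number, and b ∈ ℝⁿ a vector such that G = λγ − b bᵀ is invertible. Then bᵀℓ ≠ 0, G⁻¹ b = −(bᵀℓ)⁻¹ ℓ, and λ · tr(G⁻¹ γ) = n − 1. -/
/-!
Since `γ ℓ = 0`, `G ℓ = -(bᵀℓ) b`, so `ℓ = -(bᵀℓ) G⁻¹ b`; as `ℓ ≠ 0`, this gives both `bᵀℓ ≠ 0`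
and the formula for `G⁻¹ b`. Writing `λγ = G + b bᵀ`, the trace of `G⁻¹ (λγ)` is
`n + bᵀ G⁻¹ b = n - 1`.
-/

open Matrix

/-- For a degenerate symmetric matrix `γ` with null vector `ℓ ≠ 0` and an invertible
auxiliary matrix `G = λγ − b bᵀ`, one has `bᵀℓ ≠ 0`, `G⁻¹ b = −(bᵀℓ)⁻¹ ℓ`, and
`λ tr(G⁻¹ γ) = n − 1`. -/
theorem stmt_10 (n : ℕ) (hn : 2 ≤ n)
    (γ : Matrix (Fin n) (Fin n) ℝ) (hγ : γ.IsSymm)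
    (ℓ : Fin n → ℝ) (hℓ : ℓ ≠ 0) (hγℓ : γ.mulVec ℓ = 0)
    (lam : ℝ) (hlam : lam ≠ 0) (b : Fin n → ℝ)
    (hG : IsUnit (lam • γ - vecMulVec b b)) :
    b ⬝ᵥ ℓ ≠ 0 ∧
    (lam • γ - vecMulVec b b)⁻¹.mulVec b = (-(b ⬝ᵥ ℓ)⁻¹) • ℓ ∧
    lam * Matrix.trace ((lam • γ - vecMulVec b b)⁻¹ * γ) = (n : ℝ) - 1 := by
  set G := lam • γ - vecMulVec b b with hGdef
  have hdet : IsUnit G.det := (Matrix.isUnit_iff_isUnit_det G).mp hG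
  have hinv : G⁻¹ * G = 1 := Matrix.nonsing_inv_mul G hdet
  have hGl : G *ᵥ ℓ = (-(b ⬝ᵥ ℓ)) • b := by
    rw [hGdef, sub_mulVec, smul_mulVec, hγℓ, vecMulVec_mulVec]
    simp
  have hl : ℓ = (-(b ⬝ᵥ ℓ)) • (G⁻¹ *ᵥ b) := by
    rw [← mulVec_smul, ← hGl, mulVec_mulVec, hinv, one_mulVec]
  have hne : b ⬝ᵥ ℓ ≠ 0 := by
    intro h0
    rw [h0, neg_zero, zero_smul] at hl
    exact hℓ hl
  have hb : G⁻¹ *ᵥ b = (-(b ⬝ᵥ ℓ)⁻¹) • ℓ := by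
    rw [← inv_neg, eq_inv_smul_iff₀ (neg_ne_zero.mpr hne)]
    exact hl.symm
  refine ⟨hne, hb, ?_⟩
  have hγG : lam • γ = G + vecMulVec b b := by
    rw [hGdef, sub_add_cancel]
  rw [← smul_eq_mul, ← trace_smul, ← Matrix.mul_smul, hγG, Matrix.mul_add, hinv, trace_add,
    trace_one, mul_vecMulVec, trace_vecMulVec, hb, smul_dotProduct, dotProduct_comm ℓ b,
    smul_eq_mul, neg_mul, inv_mul_cancel₀ hne, Fintype.card_fin, sub_eq_add_neg]
end

section
/- Let n ≥ 2, let γ and θ be real symmetric n×n matrices, and let ℓ ∈ ℝⁿ be a nonzero vector with γℓ = 0 and θℓ = 0. Suppose λ₁, λ₂ are nonzero real numbers and b₁, b₂ ∈ ℝⁿ are vectors such that G₁ = λ₁γ − b₁b₁ᵀ and G₂ = λ₂γ − b₂b₂ᵀ are both invertible. Then λ₁ · tr(G₁⁻¹ θ) = λ₂ · tr(G₂⁻¹ θ). -/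
open Matrix

/-!
Write `P = λ G⁻¹`. Since `G ℓ = -(b ⬝ ℓ) b` and `G` is invertible, `b ⬝ ℓ ≠ 0` and
`P γ = 1 - ℓ βᵀ`, `γ P = 1 - β ℓᵀ` with `β = b / (b ⬝ ℓ)`: thus `P` inverts `γ` modulo `ℓ`
(`exists_quasi_inverse`). Evaluating `P₁ γ P₂` in two ways gives
`P₁ - P₂ = (P₁ β₂) ℓᵀ - ℓ (β₁ᵀ P₂)`, and both terms have zero trace against `θ`,
because `θ ℓ = 0` and `ℓᵀ θ = 0`.
-/

/-- Up to rank-one terms along the null vector `ℓ`, the matrix `λ G⁻¹` is a two-sided inverse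
of `γ`. -/
lemma exists_quasi_inverse {n : ℕ} {γ : Matrix (Fin n) (Fin n) ℝ} (hγ : γ.IsSymm)
    {ℓ : Fin n → ℝ} (hℓ : ℓ ≠ 0) (hγℓ : γ *ᵥ ℓ = 0) (lam : ℝ) (b : Fin n → ℝ)
    (hG : IsUnit (lam • γ - vecMulVec b b)) :
    ∃ β : Fin n → ℝ,
      (lam • (lam • γ - vecMulVec b b)⁻¹) * γ = 1 - vecMulVec ℓ β ∧
      γ * (lam • (lam • γ - vecMulVec b b)⁻¹) = 1 - vecMulVec β ℓ := by
  have hGs : (lam • γ - vecMulVec b b)ᵀ = lam • γ - vecMulVec b b := by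
    rw [transpose_sub, transpose_smul, hγ.eq, transpose_vecMulVec]
  have hGℓ : (lam • γ - vecMulVec b b) *ᵥ ℓ = -((b ⬝ᵥ ℓ) • b) := by
    rw [sub_mulVec, smul_mulVec, hγℓ, vecMulVec_mulVec]
    simp
  have hdec : lam • γ = (lam • γ - vecMulVec b b) + vecMulVec b b := by simp
  generalize lam • γ - vecMulVec b b = G at *
  have hdet : IsUnit G.det := (isUnit_iff_isUnit_det G).1 hG
  have hc : b ⬝ᵥ ℓ ≠ 0 := by
    intro h0
    apply hℓ
    apply mulVec_injective_of_isUnit hG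
    rw [hGℓ, h0]
    simp
  have hfac : lam • γ = G * (1 - vecMulVec ℓ ((b ⬝ᵥ ℓ)⁻¹ • b)) := by
    rw [mul_sub, mul_one, mul_vecMulVec, hGℓ, hdec, vecMulVec_smul, neg_vecMulVec, smul_neg,
      sub_neg_eq_add, smul_vecMulVec, smul_smul, inv_mul_cancel₀ hc, one_smul]
  have hleft : (lam • G⁻¹) * γ = 1 - vecMulVec ℓ ((b ⬝ᵥ ℓ)⁻¹ • b) := by
    rw [smul_mul, ← Matrix.mul_smul, hfac, nonsing_inv_mul_cancel_left _ _ hdet]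
  refine ⟨(b ⬝ᵥ ℓ)⁻¹ • b, hleft, ?_⟩
  -- The right-hand identity is the transpose of the left-hand one.
  have := congrArg transpose hleft
  rwa [transpose_mul, transpose_smul, transpose_nonsing_inv, hGs, hγ.eq, transpose_sub,
    transpose_one, transpose_vecMulVec] at this

/-- The expansion coefficient `θ = λ tr(G⁻¹ θ)` defined via an auxiliary matrix
`G = λγ − b bᵀ` (with `γℓ = 0`, `θℓ = 0`) is independent of the choice of `λ` and `b`. -/
theorem stmt_11 (n : ℕ) (hn : 2 ≤ n)
    (γ θ : Matrix (Fin n) (Fin n) ℝ) (hγ : γ.IsSymm) (hθ : θ.IsSymm)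
    (ℓ : Fin n → ℝ) (hℓ : ℓ ≠ 0) (hγℓ : γ.mulVec ℓ = 0) (hθℓ : θ.mulVec ℓ = 0)
    (lam₁ lam₂ : ℝ) (h₁ : lam₁ ≠ 0) (h₂ : lam₂ ≠ 0)
    (b₁ b₂ : Fin n → ℝ)
    (hG₁ : IsUnit (lam₁ • γ - vecMulVec b₁ b₁))
    (hG₂ : IsUnit (lam₂ • γ - vecMulVec b₂ b₂)) :
    lam₁ * Matrix.trace ((lam₁ • γ - vecMulVec b₁ b₁)⁻¹ * θ)
      = lam₂ * Matrix.trace ((lam₂ • γ - vecMulVec b₂ b₂)⁻¹ * θ) := by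
  obtain ⟨β₁, hl, -⟩ := exists_quasi_inverse hγ hℓ hγℓ lam₁ b₁ hG₁
  obtain ⟨β₂, -, hr⟩ := exists_quasi_inverse hγ hℓ hγℓ lam₂ b₂ hG₂
  rw [← smul_eq_mul lam₁, ← smul_eq_mul lam₂, ← trace_smul, ← trace_smul,
    ← smul_mul, ← smul_mul]
  generalize lam₁ • (lam₁ • γ - vecMulVec b₁ b₁)⁻¹ = P₁ at *
  generalize lam₂ • (lam₂ • γ - vecMulVec b₂ b₂)⁻¹ = P₂ at *
  have hℓθ : ℓ ᵥ* θ = 0 := by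
    rw [← hθ.eq, vecMul_transpose, hθℓ]
  have key : P₂ - vecMulVec ℓ (β₁ ᵥ* P₂) = P₁ - vecMulVec (P₁ *ᵥ β₂) ℓ := by
    have h := Matrix.mul_assoc P₁ γ P₂
    rwa [hl, hr, sub_mul, one_mul, mul_sub, mul_one, vecMulVec_mul, mul_vecMulVec] at h
  have ht := congrArg (fun M => trace (M * θ)) key
  simp only [sub_mul, trace_sub, vecMulVec_mul, trace_vecMulVec, hℓθ] at ht
  rw [dotProduct_comm, ← dotProduct_mulVec, hθℓ, dotProduct_zero, dotProduct_zero] at ht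
  linarith
end
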